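/- Let n, r ∈ ℕ with r ≥ 1, let λ : ℕ → ℝ with λ_j ≥ 0 for all j, suppose that for every t > 0 the series θ(t) := Σ_j exp(−t λ_j) converges, and let a : ℕ → ℝ be such that for every N ∈ ℕ there is C_N ≥ 0 with |θ(t) − Σ_{j=0}^{N−1} a_j t^{(j−n)/r}| ≤ C_N · t^{(N−n)/r} for all t ∈ (0, 1]. Let k be the (necessarily finite) number of indices j with λ_j = 0, and set a'_j := a_j for j ≠ n and a'_n := a_n − k. Then: (i) for every z ∈ ℂ with Re(z) > n/r the series ζ(z) := Σ_{j : λ_j > 0} λ_j^{−z} converges absolutely, and ζ is differentiable (holomorphic) on {z : Re(z) > n/r}; (ii) there exists F : ℂ → ℂ, differentiable on ℂ \ {(n−j)/r : j ∈ ℕ}, agreeing with ζ on {z : Re(z) > n/r}, such that for every j ∈ ℕ, (z − (n−j)/r)·F(z) tends to a'_j/Γ((n−j)/r) as z → (n−j)/r within z ≠ (n−j)/r, where 1/Γ is the entire reciprocal Gamma function (so this limit is 0 when (n−j)/r is a non-positive integer); (iii) for every l ∈ ℕ, the function equal to F away from −l and to (−1)^l·l!·a'_{n+r·l} at −l is analytic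 at −l. -/

import Mathlib

open MeasureTheory Filter

open Set Topology Asymptotics in
/-- The heat trace minus the first `N` terms of its expansion, cut off to `(0,1]`. -/
noncomputable def zrem (n r : ℕ) (g : ℝ → ℝ) (b : ℕ → ℝ) (N : ℕ) (t : ℝ) : ℂ :=
  (g t : ℂ) - ∑ j ∈ Finset.range N, (b j : ℂ) *
    Set.indicator (Set.Ioc (0:ℝ) 1) (fun t : ℝ => (t : ℂ) ^ (((j : ℂ) - n) / r)) t

/-- `N`-th candidate for the meromorphic continuation of `Γ ζ`. -/
noncomputable def zGN (n r : ℕ) (g : ℝ → ℝ) (b : ℕ → ℝ) (N : ℕ) (z : ℂ) : ℂ :=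
  mellin (zrem n r g b N) z + ∑ j ∈ Finset.range N, (b j : ℂ) * (1 / (z + ((j : ℂ) - n) / r))

open Set Topology Asymptotics in
lemma zrem_locInt (n r : ℕ) (g : ℝ → ℝ) (b : ℕ → ℝ) (N : ℕ) (hg : AntitoneOn g (Ioi 0)) :
    LocallyIntegrableOn (zrem n r g b N) (Ioi 0) := by
  rw [locallyIntegrableOn_iff isOpen_Ioi.isLocallyClosed]
  intro K hK hKc
  unfold zrem
  refine Integrable.sub ?_ ?_
  · exact ((hg.mono hK).integrableOn_isCompact hKc).ofReal
  · refine integrable_finsetSum _ fun j _ => Integrable.const_mul ?_ _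
    refine Integrable.indicator ?_ measurableSet_Ioc
    refine ContinuousOn.integrableOn_compact hKc ?_
    intro x hx
    have hx0 : (0:ℝ) < x := hK hx
    refine ContinuousAt.continuousWithinAt ?_
    exact (Complex.continuousAt_ofReal_cpow_const _ _ (Or.inr hx0.ne'))

open Set Topology Asymptotics in
lemma zrem_top (n r : ℕ) (g : ℝ → ℝ) (b : ℕ → ℝ) (N : ℕ) (c : ℝ)
    (hgt : g =O[atTop] fun t => Real.exp (-c * t)) :
    zrem n r g b N =O[atTop] fun t => Real.exp (-c * t) := by
  have h1 : (fun t => (g t : ℂ)) =O[atTop] fun t => Real.exp (-c * t) := by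
    refine IsBigO.trans (IsBigO.of_norm_left ?_) hgt
    simp only [Complex.norm_real]
    exact (isBigO_refl g atTop).norm_left
  refine h1.congr' ?_ EventuallyEq.rfl
  filter_upwards [eventually_gt_atTop 1] with t ht
  unfold zrem
  rw [Finset.sum_eq_zero, sub_zero]
  intro j _
  rw [indicator_of_notMem, mul_zero]
  exact fun h => absurd h.2 (not_le.2 ht)

open Set Topology Asymptotics in
lemma zrem_bot (n r : ℕ) (g : ℝ → ℝ) (b : ℕ → ℝ) (N : ℕ)
    (hb : ∃ C : ℝ, ∀ t ∈ Ioc (0:ℝ) 1,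
      |g t - ∑ j ∈ Finset.range N, b j * t ^ (((j : ℝ) - n) / r)| ≤ C * t ^ (((N : ℝ) - n) / r)) :
    zrem n r g b N =O[𝓝[>] 0] fun t : ℝ => t ^ (-(((n : ℝ) - N) / r)) := by
  obtain ⟨C, hC⟩ := hb
  refine IsBigO.of_bound C ?_
  filter_upwards [Ioc_mem_nhdsGT (zero_lt_one' ℝ)] with t ht
  have ht0 : 0 < t := ht.1
  have : zrem n r g b N t =
      ((g t - ∑ j ∈ Finset.range N, b j * t ^ (((j : ℝ) - n) / r) : ℝ) : ℂ) := by
    unfold zrem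
    push_cast
    congr 1
    refine Finset.sum_congr rfl fun j _ => ?_
    rw [indicator_of_mem ht, Complex.ofReal_cpow ht0.le]
    push_cast
    rfl
  rw [this, Complex.norm_real, Real.norm_eq_abs, Real.norm_of_nonneg (by positivity)]
  refine (hC t ht).trans_eq ?_
  congr 2
  ring

open Set Topology Asymptotics in
/-- Package of the analytic hypotheses on the reduced heat trace. -/
structure ZData (n r : ℕ) (g : ℝ → ℝ) (b : ℕ → ℝ) : Prop where
  hr : 1 ≤ r
  anti : AntitoneOn g (Ioi 0)
  top : ∃ c : ℝ, 0 < c ∧ g =O[atTop] fun t => Real.exp (-c * t)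
  bot : ∀ N : ℕ, ∃ C : ℝ, ∀ t ∈ Ioc (0:ℝ) 1,
      |g t - ∑ j ∈ Finset.range N, b j * t ^ (((j : ℝ) - n) / r)| ≤ C * t ^ (((N : ℝ) - n) / r)

namespace ZData
open Set Topology Asymptotics

variable {n r : ℕ} {g : ℝ → ℝ} {b : ℕ → ℝ}

lemma conv (h : ZData n r g b) (N : ℕ) {z : ℂ} (hz : ((n : ℝ) - N) / r < z.re) :
    MellinConvergent (zrem n r g b N) z := by
  obtain ⟨c, hc, hct⟩ := h.top
  exact mellinConvergent_of_isBigO_rpow_exp hc (zrem_locInt n r g b N h.anti)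
    (zrem_top n r g b N c hct) (zrem_bot n r g b N (h.bot N)) hz

lemma diff (h : ZData n r g b) (N : ℕ) {z : ℂ} (hz : ((n : ℝ) - N) / r < z.re) :
    DifferentiableAt ℂ (mellin (zrem n r g b N)) z := by
  obtain ⟨c, hc, hct⟩ := h.top
  exact mellin_differentiableAt_of_isBigO_rpow_exp hc (zrem_locInt n r g b N h.anti)
    (zrem_top n r g b N c hct) (zrem_bot n r g b N (h.bot N)) hz

lemma re_p (x y : ℕ) : (((x : ℂ) - y) / r).re = ((x : ℝ) - y) / r := by
  have : ((x : ℂ) - y) / r = (((((x : ℝ) - y) / r : ℝ)) : ℂ) := by push_cast; rfl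
  rw [this, Complex.ofReal_re]

lemma step (h : ZData n r g b) (N : ℕ) {z : ℂ} (hz : ((n : ℝ) - N) / r < z.re) :
    zGN n r g b N z = zGN n r g b (N + 1) z := by
  have hr : (0:ℝ) < r := by exact_mod_cast h.hr
  have hz' : ((n : ℝ) - (N + 1 : ℕ)) / r < z.re := by
    refine lt_of_le_of_lt ?_ hz
    gcongr
    simp
  have h1 : HasMellin (indicator (Ioc (0:ℝ) 1) (fun t : ℝ => (t : ℂ) ^ (((N : ℂ) - n) / r))) z
      (1 / (z + ((N : ℂ) - n) / r)) := by
    refine hasMellin_cpow_Ioc _ ?_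
    rw [re_p]
    have : ((N : ℝ) - n) / r = -(((n : ℝ) - N) / r) := by ring
    linarith
  have h2 := hasMellin_const_smul h1.1 (b N : ℂ)
  have h3 := hasMellin_add (h.conv (N + 1) hz') h2.1
  have h4 : (fun t => zrem n r g b (N + 1) t + (b N : ℂ) •
      (indicator (Ioc (0:ℝ) 1) (fun t : ℝ => (t : ℂ) ^ (((N : ℂ) - n) / r))) t)
      = zrem n r g b N := by
    funext t
    simp only [zrem, Finset.sum_range_succ, smul_eq_mul]
    ring
  have h5 := h3.2
  rw [h4, h2.2, h1.2, smul_eq_mul] at h5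
  simp only [zGN, Finset.sum_range_succ]
  rw [h5]
  ring

lemma stepLe (h : ZData n r g b) {N M : ℕ} (hNM : N ≤ M) {z : ℂ}
    (hz : ((n : ℝ) - N) / r < z.re) : zGN n r g b N z = zGN n r g b M z := by
  have hr : (0:ℝ) < r := by exact_mod_cast h.hr
  induction M, hNM using Nat.le_induction with
  | base => rfl
  | succ M hM ih =>
    rw [ih]
    refine h.step M (lt_of_le_of_lt ?_ hz)
    gcongr

lemma exN (h : ZData n r g b) (x : ℝ) : ∃ N : ℕ, ((n : ℝ) - N) / r < x := by
  have hr : (0:ℝ) < r := by exact_mod_cast h.hr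
  obtain ⟨N, hN⟩ := exists_nat_gt ((n : ℝ) - x * r)
  refine ⟨N, ?_⟩
  rw [div_lt_iff₀ hr]
  linarith

lemma exG (h : ZData n r g b) : ∃ G : ℂ → ℂ, ∀ N : ℕ, ∀ z : ℂ, ((n : ℝ) - N) / r < z.re →
    G z = zGN n r g b N z := by
  choose f hf using fun z : ℂ => h.exN z.re
  refine ⟨fun z => zGN n r g b (f z) z, fun N z hz => ?_⟩
  show zGN n r g b (f z) z = _
  rcases le_total N (f z) with hl | hl
  · exact (h.stepLe hl hz).symm
  · exact h.stepLe hl (hf z)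

lemma ev (N : ℕ) {z : ℂ} (hz : ((n : ℝ) - N) / r < z.re) :
    ∀ᶠ w in 𝓝 z, ((n : ℝ) - N) / r < w.re :=
  (isOpen_lt continuous_const Complex.continuous_re).mem_nhds hz

lemma diffG (h : ZData n r g b) {G : ℂ → ℂ} (hG : ∀ N : ℕ, ∀ z : ℂ, ((n : ℝ) - N) / r < z.re →
    G z = zGN n r g b N z) {z : ℂ} (N : ℕ) (hN : ((n : ℝ) - N) / r < z.re)
    (hz : ∀ j < N, z ≠ ((n : ℂ) - j) / r) : DifferentiableAt ℂ G z := by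
  have : G =ᶠ[𝓝 z] zGN n r g b N := (ev N hN).mono fun w hw => hG N w hw
  refine DifferentiableAt.congr_of_eventuallyEq ?_ this
  unfold zGN
  refine (h.diff N hN).add (DifferentiableAt.fun_sum fun j hj => ?_)
  refine (DifferentiableAt.div (by fun_prop) (by fun_prop) ?_).const_mul _
  intro h0
  refine hz j (Finset.mem_range.1 hj) ?_
  linear_combination h0

lemma tendG (h : ZData n r g b) {G : ℂ → ℂ} (hG : ∀ N : ℕ, ∀ z : ℂ, ((n : ℝ) - N) / r < z.re →
    G z = zGN n r g b N z) (j : ℕ) :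
    Tendsto (fun z : ℂ => (z - ((n : ℂ) - j) / r) * G z) (𝓝[≠] (((n : ℂ) - j) / r))
      (𝓝 (b j : ℂ)) := by
  have hr : (0:ℝ) < r := by exact_mod_cast h.hr
  have hrC : (r:ℂ) ≠ 0 := by exact_mod_cast hr.ne'
  set p : ℂ := ((n : ℂ) - j) / r with hp
  have hN : ((n : ℝ) - (j + 1 : ℕ)) / r < p.re := by
    rw [hp, re_p]
    gcongr
    simp
  -- regular part
  set H : ℂ → ℂ := fun z => mellin (zrem n r g b (j+1)) z +
    ∑ i ∈ Finset.range j, (b i : ℂ) * (1 / (z + ((i : ℂ) - n) / r)) with hH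
  have hHd : DifferentiableAt ℂ H p := by
    refine (h.diff (j+1) hN).add (DifferentiableAt.fun_sum fun i hi => ?_)
    refine (DifferentiableAt.div (by fun_prop) (by fun_prop) ?_).const_mul _
    intro h0
    have hij : (i:ℂ) = j := by
      rw [hp] at h0
      field_simp at h0
      linear_combination h0
    have : i = j := by exact_mod_cast hij
    exact absurd (Finset.mem_range.1 hi) (by omega)
  have hc : ContinuousAt (fun z => (z - p) * H z + (b j : ℂ)) p :=
    ((continuousAt_id.sub continuousAt_const).mul hHd.continuousAt).add continuousAt_const
  have ht := hc.tendsto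
  simp only [sub_self, zero_mul, zero_add] at ht
  refine (ht.mono_left nhdsWithin_le_nhds).congr' ?_
  filter_upwards [nhdsWithin_le_nhds (ev (j+1) hN), self_mem_nhdsWithin] with z hz hzp
  rw [hG _ z hz]
  have hzp' : z - p ≠ 0 := sub_ne_zero.2 hzp
  have : z + ((j : ℂ) - n) / r = z - p := by rw [hp]; ring
  simp only [zGN, Finset.sum_range_succ, hH, this]
  have h1 : (z - p) * (1 / (z - p)) = 1 := mul_one_div_cancel hzp'
  linear_combination (-(b j : ℂ)) * h1

end ZData

open Set Topology in
lemma gamma_res (l : ℕ) : Tendsto (fun z : ℂ => (z + l) * Complex.Gamma z) (𝓝[≠] (-(l:ℂ)))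
    (𝓝 ((-1) ^ l / (l.factorial : ℂ))) := by
  induction l with
  | zero => simpa using Complex.tendsto_self_mul_Gamma_nhds_zero
  | succ l ih =>
    have hne : (-((l + 1 : ℕ) : ℂ)) ≠ 0 := neg_ne_zero.2 (by exact_mod_cast l.succ_ne_zero)
    have h1 : Tendsto (fun z : ℂ => z + 1) (𝓝[≠] (-((l + 1 : ℕ):ℂ))) (𝓝[≠] (-(l:ℂ))) := by
      refine tendsto_nhdsWithin_iff.2 ⟨?_, ?_⟩
      · have : ContinuousAt (fun z : ℂ => z + 1) (-((l + 1 : ℕ):ℂ)) := by fun_prop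
        have h := this.tendsto
        have e : (-((l + 1 : ℕ):ℂ)) + 1 = -(l:ℂ) := by push_cast; ring
        rw [e] at h
        exact h.mono_left nhdsWithin_le_nhds
      · filter_upwards [self_mem_nhdsWithin] with z hz h
        refine hz ?_
        have h' : z + 1 = -(l:ℂ) := h
        show z = _
        push_cast
        linear_combination h'
    have h2 := (ih.comp h1).div (tendsto_id.mono_left nhdsWithin_le_nhds) hne
    have e : (-1 : ℂ) ^ l / (l.factorial : ℂ) / (-((l + 1 : ℕ) : ℂ))
        = (-1) ^ (l + 1) / ((l + 1).factorial : ℂ) := by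
      rw [Nat.factorial_succ, pow_succ]
      have := Nat.factorial_ne_zero l
      have hl : ((l:ℂ) + 1) ≠ 0 := by exact_mod_cast l.succ_ne_zero
      push_cast
      field_simp
    rw [e] at h2
    refine h2.congr' ?_
    filter_upwards [nhdsWithin_le_nhds (isOpen_ne.mem_nhds hne)] with z hz
    have hz0 : z ≠ 0 := hz
    simp only [Pi.div_apply, Function.comp, id]
    rw [Complex.Gamma_add_one z hz0]
    push_cast
    field_simp
    ring

open Set Topology in
/-- Summability of the Dirichlet series from Mellin convergence. -/
lemma dir_summable {ι : Type*} (p : ι → ℝ) (hp : ∀ i, 0 < p i) (g : ℝ → ℝ)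
    (hg : ∀ t, 0 < t → HasSum (fun i => Real.exp (-p i * t)) (g t)) (s : ℝ) (hs : 0 < s)
    (hm : MellinConvergent (fun t => (g t : ℂ)) (s : ℂ)) :
    Summable fun i => 1 / (p i) ^ s := by
  have hGpos := Real.Gamma_pos_of_pos hs
  have hint : IntegrableOn (fun t : ℝ => t ^ (s - 1) * g t) (Ioi 0) := by
    have := hm.re
    refine IntegrableOn.congr_fun this (fun t ht => ?_) measurableSet_Ioi
    have ht0 : (0:ℝ) < t := ht
    have : (t : ℂ) ^ ((s : ℂ) - 1) = ((t ^ (s - 1) : ℝ) : ℂ) := by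
      rw [Complex.ofReal_cpow ht0.le]; push_cast; rfl
    simp [this, ← Complex.ofReal_mul]
  have hterm : ∀ i, IntegrableOn (fun t : ℝ => t ^ (s - 1) * Real.exp (-(p i * t))) (Ioi 0) := by
    intro i
    refine Integrable.of_integral_ne_zero ?_
    rw [Real.integral_rpow_mul_exp_neg_mul_Ioi hs (hp i)]
    have := hp i
    positivity
  refine summable_of_sum_le (c := (∫ t in Ioi (0:ℝ), t ^ (s - 1) * g t) / Real.Gamma s)
    (fun i => by have := hp i; positivity) fun u => ?_
  rw [le_div_iff₀ hGpos]
  have : (∑ i ∈ u, 1 / p i ^ s) * Real.Gamma s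
      = ∫ t in Ioi (0:ℝ), ∑ i ∈ u, t ^ (s - 1) * Real.exp (-(p i * t)) := by
    rw [integral_finsetSum _ fun i _ => hterm i, Finset.sum_mul]
    refine Finset.sum_congr rfl fun i _ => ?_
    rw [Real.integral_rpow_mul_exp_neg_mul_Ioi hs (hp i), Real.div_rpow zero_le_one (hp i).le,
      Real.one_rpow]
  rw [this]
  refine setIntegral_mono_on (integrable_finsetSum _ fun i _ => hterm i) hint measurableSet_Ioi ?_
  intro t ht
  have ht0 : (0:ℝ) < t := ht
  rw [← Finset.mul_sum]
  refine mul_le_mul_of_nonneg_left ?_ (by positivity)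
  have := sum_le_hasSum u (fun i _ => (Real.exp_pos (-p i * t)).le) (hg t ht0)
  simpa only [neg_mul] using this

/-- Corollary 2.6: meromorphic continuation of the spectral zeta function
`ζ(z) = Σ_{λ_j > 0} λ_j^{-z}` of an eigenvalue sequence whose heat trace
`θ(t) = Σ_j e^{-t λ_j}` admits the asymptotic expansion `Σ_j a_j t^{(j-n)/r}` as
`t → 0⁺`; the continuation has at most simple poles at `(n-j)/r` with residues
`a'_j / Γ((n-j)/r)` (via the entire reciprocal Gamma function), and takes the values
`(-1)^l l! a'_{n+rl}` at `-l ∈ -ℕ₀`, where `a'_j = a_j` for `j ≠ n` and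
`a'_n = a_n - dim ker`. -/
theorem stmt_6 (n r : ℕ) (hr : 1 ≤ r)
    (lam : ℕ → ℝ) (hlam : ∀ j, 0 ≤ lam j)
    (hsum : ∀ t : ℝ, 0 < t → Summable fun j => Real.exp (-t * lam j))
    (a : ℕ → ℝ)
    (hasym : ∀ N : ℕ, ∃ CN : ℝ, 0 ≤ CN ∧ ∀ t ∈ Set.Ioc (0 : ℝ) 1,
      |(∑' j, Real.exp (-t * lam j))
          - ∑ j ∈ Finset.range N, a j * t ^ (((j : ℝ) - n) / r)|
        ≤ CN * t ^ (((N : ℝ) - n) / r))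
    (k : ℕ) (hkfin : {j : ℕ | lam j = 0}.Finite)
    (hk : Nat.card {j : ℕ | lam j = 0} = k)
    (a' : ℕ → ℝ) (ha' : ∀ j, j ≠ n → a' j = a j) (ha'n : a' n = a n - k) :
    (∀ z : ℂ, (n : ℝ) / r < z.re →
      Summable fun j : {j : ℕ // 0 < lam j} => ‖(lam j.1 : ℂ) ^ (-z)‖) ∧
    (∀ z : ℂ, (n : ℝ) / r < z.re → DifferentiableAt ℂ
      (fun z : ℂ => ∑' j : {j : ℕ // 0 < lam j}, (lam j.1 : ℂ) ^ (-z)) z) ∧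
    ∃ F : ℂ → ℂ,
      (∀ z : ℂ, (∀ j : ℕ, z ≠ ((n : ℂ) - j) / r) → DifferentiableAt ℂ F z) ∧
      (∀ z : ℂ, (n : ℝ) / r < z.re →
        F z = ∑' j : {j : ℕ // 0 < lam j}, (lam j.1 : ℂ) ^ (-z)) ∧
      (∀ j : ℕ, Tendsto (fun z : ℂ => (z - ((n : ℂ) - j) / r) * F z)
        (nhdsWithin (((n : ℂ) - j) / r) {((n : ℂ) - j) / r}ᶜ)
        (nhds ((Complex.Gamma (((n : ℂ) - j) / r))⁻¹ * (a' j : ℂ)))) ∧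
      (∀ l : ℕ, AnalyticAt ℂ
        (Function.update F (-(l : ℂ))
          ((-1 : ℂ) ^ l * (l.factorial : ℂ) * (a' (n + r * l) : ℂ)))
        (-(l : ℂ))) := by
  have hr0 : (0:ℝ) < r := by exact_mod_cast hr
  have hrC : (r:ℂ) ≠ 0 := by exact_mod_cast hr0.ne'
  set g : ℝ → ℝ := fun t => ∑' j : {j : ℕ // 0 < lam j}, Real.exp (-lam j.1 * t) with hg
  have hgs : ∀ t, 0 < t → HasSum (fun j : {j : ℕ // 0 < lam j} => Real.exp (-lam j.1 * t)) (g t) := by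
    intro t ht
    refine Summable.hasSum ?_
    have := (hsum t ht).subtype {j | 0 < lam j}
    refine this.congr fun j => ?_
    simp only [Function.comp]
    congr 1
    ring
  have hgθ : ∀ t, 0 < t → g t = (∑' j, Real.exp (-t * lam j)) - k := by
    intro t ht
    have h1 := (hsum t ht).tsum_subtype_add_tsum_subtype_compl {j | 0 < lam j}
    have h2 : {j | 0 < lam j}ᶜ = {j | lam j = 0} := by
      ext j
      simp only [Set.mem_compl_iff, Set.mem_setOf_eq, not_lt]
      exact ⟨fun h => le_antisymm h (hlam j), fun h => h.le⟩
    rw [h2] at h1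
    have h3 : ∑' x : {j | lam j = 0}, Real.exp (-t * lam x) = k := by
      rw [← hk]
      have : ∀ x : {j | lam j = 0}, Real.exp (-t * lam x) = 1 := fun x => by
        have : lam x = 0 := x.2
        simp [this]
      simp only [this, tsum_const, nsmul_eq_mul, mul_one]
    rw [h3] at h1
    have h4 : g t = ∑' x : {j | 0 < lam j}, Real.exp (-t * lam x) := by
      rw [hg]
      refine tsum_congr fun j => ?_
      congr 1
      ring
    linarith
  -- a positive lower bound for the positive eigenvalues
  have hlow : ∃ c : ℝ, 0 < c ∧ ∀ j, 0 < lam j → c ≤ lam j := by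
    have h1 := (hsum 1 one_pos).tendsto_cofinite_zero
    have h2 : ∀ᶠ j in cofinite, Real.exp (-1 * lam j) < Real.exp (-1) :=
      h1.eventually_lt_const (Real.exp_pos _)
    have h3 : {j | lam j ≤ 1}.Finite := by
      refine (Filter.eventually_cofinite.1 h2).subset fun j hj => ?_
      have : lam j ≤ 1 := hj
      simp only [Set.mem_setOf_eq, not_lt, Real.exp_le_exp]
      linarith
    have h4 : ({j | 0 < lam j ∧ lam j ≤ 1}).Finite := h3.subset fun j hj => hj.2
    rcases Set.eq_empty_or_nonempty {j | 0 < lam j ∧ lam j ≤ 1} with he | hne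
    · refine ⟨1, one_pos, fun j hj => ?_⟩
      by_contra hlt
      have : j ∈ {j | 0 < lam j ∧ lam j ≤ 1} := ⟨hj, (not_le.1 hlt).le⟩
      rw [he] at this
      exact this
    · obtain ⟨m, hm, hmin⟩ := Set.exists_min_image _ lam h4 hne
      refine ⟨lam m, hm.1, fun j hj => ?_⟩
      rcases le_total (lam j) 1 with hle | hle
      · exact hmin j ⟨hj, hle⟩
      · exact hm.2.trans hle
  have hD : ZData n r g a' := by
    refine ⟨hr, ?_, ?_, ?_⟩
    · intro s hs t ht hst
      refine hasSum_le (fun j => ?_) (hgs t ht) (hgs s hs)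
      refine Real.exp_le_exp.2 ?_
      have := mul_le_mul_of_nonneg_left hst j.2.le
      linarith
    · obtain ⟨c, hc, hcl⟩ := hlow
      refine ⟨c, hc, Asymptotics.IsBigO.of_bound (g 1 * Real.exp c) ?_⟩
      filter_upwards [eventually_ge_atTop 1] with t ht
      have ht0 : (0:ℝ) < t := by linarith
      rw [Real.norm_of_nonneg (tsum_nonneg fun j => (Real.exp_pos _).le),
        Real.norm_of_nonneg (Real.exp_pos _).le, mul_assoc, ← Real.exp_add]
      refine hasSum_le (fun j => ?_) (hgs t ht0) ((hgs 1 one_pos).mul_right _)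
      rw [← Real.exp_add]
      refine Real.exp_le_exp.2 ?_
      have := mul_le_mul_of_nonneg_right (hcl j.1 j.2) (sub_nonneg.2 ht)
      linarith
    · intro N
      obtain ⟨C, hC0, hC⟩ := hasym N
      refine ⟨C + k, fun t ht => ?_⟩
      have ht0 : (0:ℝ) < t := ht.1
      rw [hgθ t ht0]
      have hk0 : (0:ℝ) ≤ k := k.cast_nonneg
      have hpow : 0 < t ^ (((N : ℝ) - n) / r) := Real.rpow_pos_of_pos ht0 _
      have hb := hC t ht
      have hcorr : ∀ j, a' j * t ^ (((j : ℝ) - n) / r)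
          = a j * t ^ (((j : ℝ) - n) / r) - if j = n then (k:ℝ) else 0 := by
        intro j
        by_cases hj : j = n
        · subst hj
          simp [ha'n]
        · simp [hj, ha' j hj]
      rw [Finset.sum_congr rfl fun j _ => hcorr j, Finset.sum_sub_distrib, Finset.sum_ite_eq']
      by_cases hn : n ∈ Finset.range N
      · rw [if_pos hn]
        have e : ∀ x y : ℝ, x - k - (y - k) = x - y := fun x y => by ring
        rw [e]
        nlinarith
      · rw [if_neg hn, sub_zero]
        have hNn : (N:ℝ) ≤ n := by
          have : N ≤ n := by simpa using hn
          exact_mod_cast this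
        have h1 : 1 ≤ t ^ (((N : ℝ) - n) / r) :=
          Real.one_le_rpow_of_pos_of_le_one_of_nonpos ht0 ht.2
            (div_nonpos_of_nonpos_of_nonneg (by linarith) hr0.le)
        rw [abs_le] at hb ⊢
        constructor <;> nlinarith
  have hz0 : ∀ z : ℂ, (n : ℝ) / r < z.re → 0 < z.re := fun z hz =>
    lt_of_le_of_lt (by positivity) hz
  have hzr : zrem n r g a' 0 = fun t => (g t : ℂ) := by
    funext t
    simp [zrem]
  have hS : ∀ z : ℂ, (n : ℝ) / r < z.re →
      Summable fun j : {j : ℕ // 0 < lam j} => 1 / (lam j.1) ^ z.re := by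
    intro z hz
    refine dir_summable (fun j : {j : ℕ // 0 < lam j} => lam j.1) (fun j => j.2) g hgs z.re
      (hz0 z hz) ?_
    rw [← hzr]
    exact hD.conv 0 (by simpa using hz)
  obtain ⟨G, hG⟩ := hD.exG
  have hF : ∀ z : ℂ, (n : ℝ) / r < z.re →
      (Complex.Gamma z)⁻¹ * G z = ∑' j : {j : ℕ // 0 < lam j}, (lam j.1 : ℂ) ^ (-z) := by
    intro z hz
    have hΓ : Complex.Gamma z ≠ 0 := Complex.Gamma_ne_zero_of_re_pos (hz0 z hz)
    have h1 := hasSum_mellin (a := fun _ : {j : ℕ // 0 < lam j} => (1:ℂ))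
      (p := fun j => lam j.1) (F := fun t => (g t : ℂ)) (s := z) (fun j => Or.inr j.2) (hz0 z hz)
      (fun t ht => by
        simp only [one_mul]
        exact_mod_cast hgs t ht)
      (by simpa using hS z hz)
    have h2 : G z = mellin (fun t => (g t : ℂ)) z := by
      rw [hG 0 z (by simpa using hz)]
      simp [zGN, hzr]
    rw [h2]
    have h3 := (h1.mul_left (Complex.Gamma z)⁻¹).tsum_eq
    rw [← h3]
    refine tsum_congr fun j => ?_
    rw [Complex.cpow_neg]
    field_simp
  have hΓd := Complex.differentiable_one_div_Gamma
  have hFd : ∀ (z : ℂ) (N : ℕ), ((n : ℝ) - N) / r < z.re → (∀ j < N, z ≠ ((n : ℂ) - j) / r) →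
      DifferentiableAt ℂ (fun z => (Complex.Gamma z)⁻¹ * G z) z := fun z N hN hz =>
    (hΓd z).mul (hD.diffG hG N hN hz)
  refine ⟨?_, ?_, fun z => (Complex.Gamma z)⁻¹ * G z, ?_, hF, ?_, ?_⟩
  · intro z hz
    refine (hS z hz).congr fun j => ?_
    rw [Complex.norm_cpow_eq_rpow_re_of_pos j.2, Complex.neg_re, Real.rpow_neg j.2.le, one_div]
  · intro z hz
    refine (hFd z 0 (by simpa using hz) (by simp)).congr_of_eventuallyEq ?_
    have : ∀ᶠ w in nhds z, (n : ℝ) / r < w.re :=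
      (isOpen_lt continuous_const Complex.continuous_re).mem_nhds hz
    exact this.mono fun w hw => (hF w hw).symm
  · intro z hz
    obtain ⟨N, hN⟩ := hD.exN z.re
    exact hFd z N hN fun j _ => hz j
  · intro j
    have h1 := (hΓd (((n : ℂ) - j) / r)).continuousAt.tendsto.mono_left
      (nhdsWithin_le_nhds (s := {((n : ℂ) - j) / r}ᶜ))
    refine (h1.mul (hD.tendG hG j)).congr fun z => ?_
    ring
  · intro l
    refine Complex.analyticAt_of_differentiable_on_punctured_nhds_of_continuousAt ?_ ?_
    · obtain ⟨N, hN⟩ := hD.exN (-(l : ℂ)).re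
      have h1 : ∀ᶠ z in nhdsWithin (-(l : ℂ)) {-(l : ℂ)}ᶜ,
          ∀ j ∈ Finset.range N, z ≠ ((n : ℂ) - j) / r := by
        rw [Filter.eventually_all_finset]
        intro j _
        by_cases h : -(l : ℂ) = ((n : ℂ) - j) / r
        · rw [← h]
          exact self_mem_nhdsWithin
        · exact nhdsWithin_le_nhds (isOpen_ne.mem_nhds h)
      filter_upwards [h1, nhdsWithin_le_nhds (ZData.ev N hN), self_mem_nhdsWithin] with z hz hzN hzl
      refine (hFd z N hzN fun j hj => hz j (Finset.mem_range.2 hj)).congr_of_eventuallyEq ?_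
      filter_upwards [isOpen_ne.mem_nhds hzl] with w hw
      exact Function.update_of_ne hw _ _
    · rw [continuousAt_update_same]
      have hp : ((n : ℂ) - ((n + r * l : ℕ) : ℂ)) / r = -(l : ℂ) := by
        push_cast
        field_simp
        ring
      have h1 := hD.tendG hG (n + r * l)
      rw [hp] at h1
      have hne : (-1 : ℂ) ^ l / (l.factorial : ℂ) ≠ 0 := by
        have := Nat.factorial_ne_zero l
        refine div_ne_zero (pow_ne_zero _ (by norm_num)) (by exact_mod_cast this)
      have h2 := ((gamma_res l).inv₀ hne).mul h1
      have e : ((-1 : ℂ) ^ l / (l.factorial : ℂ))⁻¹ = (-1) ^ l * (l.factorial : ℂ) := by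
        rw [inv_div, div_eq_mul_inv, ← inv_pow, mul_comm]
        norm_num
      rw [e] at h2
      refine h2.congr' ?_
      filter_upwards [self_mem_nhdsWithin] with z hz
      have hz' : z + l ≠ 0 := fun h => hz (by
        show z = _
        linear_combination h)
      rw [sub_neg_eq_add, mul_inv]
      field_simp
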